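/- Let W be a finite-dimensional complex vector space regarded as a trivial module over sl(2,ℂ), and let β : W × W → ℂ be a symmetric bilinear form. Set g₁ = sl(2,ℂ) ⊕ W, where the first summand is the adjoint module, with action x·(y,w) = (⁅x,y⁆, 0). Define μ : g₁³ → sl(2,ℂ) by μ((y₁,w₁),(y₂,w₂),(y₃,w₃)) = β(w₁,w₂)y₃ + β(w₂,w₃)y₁ + β(w₃,w₁)y₂. Then μ is totally symmetric, satisfies the equivariance identity J3 and the identity J4; hence sl(2,ℂ) ⊕ (sl(2,ℂ) ⊕ W) is an elementary Lie algebra of order 3. (This is case 2 of Theorem 3.1, with g₁ ≅ D₂ ⊕ D₀^{(1)} ⊕ ⋯ ⊕ D₀^{(k)} and brackets {λᵢ,λⱼ,Y_a} = α_{ij}X_a, where α_{ij} = β(λᵢ,λⱼ).) -/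

import Mathlib

noncomputable section

/-- The Lie algebra `sl(2,ℂ)` of traceless `2×2` complex matrices. -/
abbrev sl2C : Type := ↥(LieAlgebra.SpecialLinear.sl (Fin 2) ℂ)

/-- On `g₁ = sl(2,ℂ) ⊕ W` (adjoint module plus trivial module `W`), the 3-bracket
`μ((y₁,w₁),(y₂,w₂),(y₃,w₃)) = β(w₁,w₂)y₃ + β(w₂,w₃)y₁ + β(w₃,w₁)y₂`. -/
def muAdW {W : Type*} [AddCommGroup W] [Module ℂ W] (β : W →ₗ[ℂ] W →ₗ[ℂ] ℂ)
    (p q r : sl2C × W) : sl2C :=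
  β p.2 q.2 • r.1 + β q.2 r.2 • p.1 + β r.2 p.2 • q.1

/-- The action of `sl(2,ℂ)` on `g₁ = sl(2,ℂ) ⊕ W`: `x·(y,w) = (⁅x,y⁆, 0)`. -/
def actAdW {W : Type*} [AddCommGroup W] [Module ℂ W] (x : sl2C) (p : sl2C × W) :
    sl2C × W :=
  (⁅x, p.1⁆, 0)

/-! The identity J4 is the full polarization of `⁅β(w,w) y, y⁆ = 0`: each coefficient `β(wᵢ,wⱼ)`
occurs exactly twice, multiplying `⁅yₖ,yₗ⁆` and `⁅yₗ,yₖ⁆` for the complementary pair `{k, l}`. In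
J3 the trivial action on `W` leaves exactly one summand of each of the three terms on the right. -/

section TrivialSummand

variable {R L V W : Type*}

/-- The 3-bracket `(v₁,w₁), (v₂,w₂), (v₃,w₃) ↦ β(w₁,w₂)v₃ + β(w₂,w₃)v₁ + β(w₃,w₁)v₂` on `V ⊕ W`
attached to a bilinear form `β` on `W`; `muAdW` is the case `V = sl(2,ℂ)`. -/
def formTripleBracket [CommSemiring R] [AddCommMonoid V] [Module R V] [AddCommMonoid W]
    [Module R W] (β : W →ₗ[R] W →ₗ[R] R) (p q r : V × W) : V :=
  β p.2 q.2 • r.1 + β q.2 r.2 • p.1 + β r.2 p.2 • q.1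

/-- The action of `L` on the direct sum of an `L`-module `V` and a trivial module `W`. It is kept
as a function, so that `W` need not carry a `LieRingModule` instance; `actAdW` is the case
`L = V = sl(2,ℂ)`. -/
def trivialSummandAction [Bracket L V] [Zero W] (x : L) (p : V × W) : V × W :=
  (⁅x, p.1⁆, 0)

section Symmetry

variable [CommSemiring R] [AddCommMonoid V] [Module R V] [AddCommMonoid W] [Module R W]
  {β : W →ₗ[R] W →ₗ[R] R}

theorem formTripleBracket_rotate (p q r : V × W) :
    formTripleBracket β p q r = formTripleBracket β q r p := by
  unfold formTripleBracket
  abel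

theorem formTripleBracket_swap_left (hβ : ∀ w w', β w w' = β w' w) (p q r : V × W) :
    formTripleBracket β p q r = formTripleBracket β q p r := by
  unfold formTripleBracket
  rw [hβ p.2 q.2, hβ q.2 r.2, hβ r.2 p.2]
  abel

theorem formTripleBracket_swap_right (hβ : ∀ w w', β w w' = β w' w) (p q r : V × W) :
    formTripleBracket β p q r = formTripleBracket β p r q :=
  calc
    formTripleBracket β p q r = formTripleBracket β q r p := formTripleBracket_rotate p q r
    _ = formTripleBracket β r q p := formTripleBracket_swap_left hβ q r p
    _ = formTripleBracket β p r q := (formTripleBracket_rotate p r q).symm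

end Symmetry

variable [CommRing R] [LieRing L] [LieAlgebra R L] [AddCommGroup W] [Module R W]
  {β : W →ₗ[R] W →ₗ[R] R}

theorem lie_formTripleBracket [AddCommGroup V] [Module R V] [LieRingModule L V] [LieModule R L V]
    (x : L) (p q r : V × W) :
    ⁅x, formTripleBracket β p q r⁆ =
      formTripleBracket β (trivialSummandAction x p) q r +
        formTripleBracket β p (trivialSummandAction x q) r +
        formTripleBracket β p q (trivialSummandAction x r) := by
  have act_left : formTripleBracket β (trivialSummandAction x p) q r =
      β q.2 r.2 • ⁅x, p.1⁆ := by
    simp [formTripleBracket, trivialSummandAction]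
  have act_middle : formTripleBracket β p (trivialSummandAction x q) r =
      β r.2 p.2 • ⁅x, q.1⁆ := by
    simp [formTripleBracket, trivialSummandAction]
  have act_right : formTripleBracket β p q (trivialSummandAction x r) =
      β p.2 q.2 • ⁅x, r.1⁆ := by
    simp [formTripleBracket, trivialSummandAction]
  rw [act_left, act_middle, act_right, formTripleBracket, lie_add, lie_add, lie_smul, lie_smul,
    lie_smul]
  abel

theorem formTripleBracket_lie (p q r : L × W) (y : L) :
    ⁅formTripleBracket β p q r, y⁆ =
      β p.2 q.2 • ⁅r.1, y⁆ + β q.2 r.2 • ⁅p.1, y⁆ + β r.2 p.2 • ⁅q.1, y⁆ := by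
  simp only [formTripleBracket, add_lie, smul_lie]

theorem smul_lie_add_smul_lie_swap (c : R) (x y : L) : c • ⁅x, y⁆ + c • ⁅y, x⁆ = 0 := by
  rw [← smul_add, ← lie_skew y x, add_neg_cancel, smul_zero]

theorem sum_lie_formTripleBracket_eq_zero (hβ : ∀ w w', β w w' = β w' w) (p q r s : L × W) :
    ⁅formTripleBracket β q r s, p.1⁆ + ⁅formTripleBracket β p r s, q.1⁆ +
      ⁅formTripleBracket β p q s, r.1⁆ + ⁅formTripleBracket β p q r, s.1⁆ = 0 :=
  calc
    _ = (β p.2 q.2 • ⁅r.1, s.1⁆ + β p.2 q.2 • ⁅s.1, r.1⁆) +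
        (β p.2 r.2 • ⁅q.1, s.1⁆ + β p.2 r.2 • ⁅s.1, q.1⁆) +
        (β p.2 s.2 • ⁅q.1, r.1⁆ + β p.2 s.2 • ⁅r.1, q.1⁆) +
        (β q.2 r.2 • ⁅p.1, s.1⁆ + β q.2 r.2 • ⁅s.1, p.1⁆) +
        (β q.2 s.2 • ⁅p.1, r.1⁆ + β q.2 s.2 • ⁅r.1, p.1⁆) +
        (β r.2 s.2 • ⁅p.1, q.1⁆ + β r.2 s.2 • ⁅q.1, p.1⁆) := by
      simp only [formTripleBracket_lie]
      rw [hβ s.2 q.2, hβ s.2 p.2, hβ r.2 p.2]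
      abel
    _ = 0 := by simp only [smul_lie_add_smul_lie_swap, add_zero]

theorem sum_trivialSummandAction_formTripleBracket_eq_zero
    (hβ : ∀ w w', β w w' = β w' w) (p q r s : L × W) :
    trivialSummandAction (formTripleBracket β q r s) p +
      trivialSummandAction (formTripleBracket β p r s) q +
      trivialSummandAction (formTripleBracket β p q s) r +
      trivialSummandAction (formTripleBracket β p q r) s = 0 :=
  Prod.ext (sum_lie_formTripleBracket_eq_zero hβ p q r s) (by simp [trivialSummandAction])

theorem sl2_adjoint_plus_trivial_order3_general
    (β : W →ₗ[R] W →ₗ[R] R) (hβ : ∀ w w' : W, β w w' = β w' w) :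
    (∀ p q r : L × W, formTripleBracket β p q r = formTripleBracket β q p r) ∧
    (∀ p q r : L × W, formTripleBracket β p q r = formTripleBracket β p r q) ∧
    (∀ (x : L) (p q r : L × W),
      ⁅x, formTripleBracket β p q r⁆ =
        formTripleBracket β (trivialSummandAction x p) q r +
          formTripleBracket β p (trivialSummandAction x q) r +
          formTripleBracket β p q (trivialSummandAction x r)) ∧
    (∀ p q r s : L × W,
      trivialSummandAction (formTripleBracket β q r s) p +
        trivialSummandAction (formTripleBracket β p r s) q +
        trivialSummandAction (formTripleBracket β p q s) r +
        trivialSummandAction (formTripleBracket β p q r) s = 0) :=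
  ⟨formTripleBracket_swap_left hβ, formTripleBracket_swap_right hβ, lie_formTripleBracket,
    sum_trivialSummandAction_formTripleBracket_eq_zero hβ⟩

end TrivialSummand

/-- Case 2 of Theorem 3.1: for `W` a finite-dimensional trivial `sl(2,ℂ)`-module and `β`
a symmetric bilinear form on `W`, the 3-bracket
`μ((y₁,w₁),(y₂,w₂),(y₃,w₃)) = β(w₁,w₂)y₃ + β(w₂,w₃)y₁ + β(w₃,w₁)y₂` on
`g₁ = sl(2,ℂ) ⊕ W` is totally symmetric and satisfies the identities J3 and J4; hence
`sl(2,ℂ) ⊕ (sl(2,ℂ) ⊕ W)` is an elementary Lie algebra of order 3. -/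
theorem sl2_adjoint_plus_trivial_order3
    {W : Type*} [AddCommGroup W] [Module ℂ W] [FiniteDimensional ℂ W]
    (β : W →ₗ[ℂ] W →ₗ[ℂ] ℂ) (hβ : ∀ w w' : W, β w w' = β w' w) :
    -- μ is totally symmetric
    (∀ p q r : sl2C × W, muAdW β p q r = muAdW β q p r) ∧
    (∀ p q r : sl2C × W, muAdW β p q r = muAdW β p r q) ∧
    -- J3 : equivariance
    (∀ (x : sl2C) (p q r : sl2C × W),
      ⁅x, muAdW β p q r⁆ =
        muAdW β (actAdW x p) q r + muAdW β p (actAdW x q) r + muAdW β p q (actAdW x r)) ∧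
    -- J4
    (∀ p q r s : sl2C × W,
      actAdW (muAdW β q r s) p + actAdW (muAdW β p r s) q +
        actAdW (muAdW β p q s) r + actAdW (muAdW β p q r) s = 0) :=
  sl2_adjoint_plus_trivial_order3_general β hβ
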